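/- Let σ > 0, μ0 < μ1, p0 = p1 = 1/2, and let φ0 and φ1 be the probability density functions of N(μ0, σ²) and N(μ1, σ²) respectively. For t ∈ ℝ define A11(t) = ∫_{−∞}^{t} φ0, A22(t) = ∫_{t}^{∞} φ1, q0(t) = (1/2)·A11(t) + (1/2)·(1−A22(t)), and the single-threshold mutual information I_1(t) = H_b(q0(t)) − (1/2)·H_b(A11(t)) − (1/2)·H_b(A22(t)). Then t* = (μ0 + μ1)/2 is the unique maximizer of I_1: I_1(t) ≤ I_1(t*) for all t ∈ ℝ, with equality only for t = t*. -/

import Mathlib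

/-!
Write `φ` for the standard normal density and `Q` for its upper tail. After standardizing with
`x = (t - t*) / σ` and `d = (μ1 - μ0) / (2σ)`, the mutual information is
`J(x) = H((a + b) / 2) - H(a) / 2 - H(b) / 2` with `a = Q(-(x + d)) > b = Q(-(x - d))`. It is even
in `x`, so it suffices that `J' < 0` on `x > 0`. With `L = logit = -H'` and `m = (a + b) / 2`, this
says `φ(x + d) (L a - L m) < φ(x - d) (L m - L b)`.

Put `U = L a - L m` and `V = L m - L b`. If `U ≤ V`, this is `φ(x + d) < φ(x - d)`. Otherwise,
`sinh (U / 2) = (a - m) / (2 √(a(1-a) m(1-m)))`, the analogous formula for `V`, and `a - m = m - b`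
give `sinh (U / 2) / sinh (V / 2) = √(b(1-b) / (a(1-a)))`; since `sinh u / u` increases,
`U / V` is at most this quantity (`logit_increment_lt`). It remains to see that
`Q(u) Q(-u) / φ(u)²`, an even function, increases for `u > 0` (`gaussTail_ratio_lt`).
Its logarithmic derivative is `2u - (λ(u) - λ(-u))`, where `λ = φ / Q` is the hazard rate, so the
bound `λ' < 1` is enough. That bound is `φ² < Q² + u φ Q` (`gaussStd_sq_lt`), which expresses that a
normal variable conditioned on exceeding `u` has positive variance.
-/

open MeasureTheory Real Set

/-- Binary entropy function. -/
noncomputable def Hb (w : ℝ) : ℝ := -(w * Real.log w) - (1 - w) * Real.log (1 - w)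

/-- `A11 t = ∫_{-∞}^t φ0`. -/
noncomputable def A11 (φ0 : ℝ → ℝ) (t : ℝ) : ℝ := ∫ y in Set.Iio t, φ0 y

/-- `A22 t = ∫_t^∞ φ1`. -/
noncomputable def A22 (φ1 : ℝ → ℝ) (t : ℝ) : ℝ := ∫ y in Set.Ioi t, φ1 y

/-- Single-threshold mutual information with `p0 = p1 = 1/2`. -/
noncomputable def I1 (φ0 φ1 : ℝ → ℝ) (t : ℝ) : ℝ :=
  Hb ((1 / 2) * A11 φ0 t + (1 / 2) * (1 - A22 φ1 t)) -
    (1 / 2) * Hb (A11 φ0 t) - (1 / 2) * Hb (A22 φ1 t)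

open Filter Topology

/-! ### The standard Gaussian density and its tail -/

/-- The standard normal density. -/
noncomputable def gaussStd (x : ℝ) : ℝ := (√(2 * π))⁻¹ * rexp (-(1 / 2) * x ^ 2)

/-- The upper tail `P(Z > u)` of a standard normal variable `Z`. -/
noncomputable def gaussTail (u : ℝ) : ℝ := ∫ y in Ioi u, gaussStd y

lemma gaussStd_pos (x : ℝ) : 0 < gaussStd x := by
  unfold gaussStd; positivity

lemma gaussStd_neg (x : ℝ) : gaussStd (-x) = gaussStd x := by
  simp [gaussStd]

lemma continuous_gaussStd : Continuous gaussStd := by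
  unfold gaussStd; fun_prop

lemma hasDerivAt_gaussStd (x : ℝ) : HasDerivAt gaussStd (-x * gaussStd x) x := by
  have h := (((hasDerivAt_pow 2 x).const_mul (-(1 / 2) : ℝ)).exp).const_mul (√(2 * π))⁻¹
  refine h.congr_deriv ?_
  simp only [gaussStd]; push_cast; ring

lemma integrable_gaussStd : Integrable gaussStd :=
  (integrable_exp_neg_mul_sq (by norm_num : (0 : ℝ) < 1 / 2)).const_mul _

lemma integrable_mul_gaussStd : Integrable (fun x => x * gaussStd x) := by
  refine ((integrable_mul_exp_neg_mul_sq (by norm_num : (0 : ℝ) < 1 / 2)).const_mul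
    (√(2 * π))⁻¹).congr (ae_of_all _ fun x => ?_)
  simp only [gaussStd]; ring

lemma integrable_sq_mul_gaussStd : Integrable (fun x => x ^ 2 * gaussStd x) := by
  refine ((integrable_rpow_mul_exp_neg_mul_sq (by norm_num : (0 : ℝ) < 1 / 2)
    (by norm_num : (-1 : ℝ) < 2)).const_mul (√(2 * π))⁻¹).congr (ae_of_all _ fun x => ?_)
  simp only [gaussStd, rpow_two]; ring

lemma integral_gaussStd : ∫ x, gaussStd x = 1 := by
  simp only [gaussStd]
  rw [integral_const_mul, integral_gaussian]
  have : π / (1 / 2) = 2 * π := by ring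
  rw [this]
  exact inv_mul_cancel₀ (by positivity)

lemma tendsto_gaussStd : Tendsto gaussStd atTop (𝓝 0) := by
  have h := ((tendsto_rpow_abs_mul_exp_neg_mul_sq_cocompact
    (by norm_num : (0 : ℝ) < 1 / 2) 0).mono_left atTop_le_cocompact).const_mul (√(2 * π))⁻¹
  rw [mul_zero] at h
  refine h.congr fun x => ?_
  simp only [gaussStd, rpow_zero, one_mul]

lemma tendsto_mul_gaussStd : Tendsto (fun x => x * gaussStd x) atTop (𝓝 0) := by
  have h := ((tendsto_rpow_abs_mul_exp_neg_mul_sq_cocompact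
    (by norm_num : (0 : ℝ) < 1 / 2) 1).mono_left atTop_le_cocompact).const_mul (√(2 * π))⁻¹
  rw [mul_zero] at h
  refine h.congr' ?_
  filter_upwards [eventually_ge_atTop 0] with x hx
  simp only [gaussStd, rpow_one, abs_of_nonneg hx]; ring

lemma gaussTail_moment_one (u : ℝ) : ∫ y in Ioi u, y * gaussStd y = gaussStd u := by
  have h := integral_Ioi_of_hasDerivAt_of_tendsto' (a := u) (f := fun x => -gaussStd x)
    (f' := fun x => x * gaussStd x) (m := 0)
    (fun x _ => ((hasDerivAt_gaussStd x).neg).congr_deriv (by ring))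
    integrable_mul_gaussStd.integrableOn (by simpa using tendsto_gaussStd.neg)
  simpa using h

lemma gaussTail_moment_two (u : ℝ) :
    ∫ y in Ioi u, y ^ 2 * gaussStd y = gaussTail u + u * gaussStd u := by
  have h := integral_Ioi_of_hasDerivAt_of_tendsto' (a := u) (f := fun x => -(x * gaussStd x))
    (f' := fun x => x ^ 2 * gaussStd x - gaussStd x) (m := 0)
    (fun x _ => (((hasDerivAt_id x).mul (hasDerivAt_gaussStd x)).neg).congr_deriv
      (by simp only [id]; ring))
    (integrable_sq_mul_gaussStd.sub integrable_gaussStd).integrableOn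
    (by simpa using tendsto_mul_gaussStd.neg)
  rw [integral_sub integrable_sq_mul_gaussStd.integrableOn
    integrable_gaussStd.integrableOn] at h
  unfold gaussTail
  linarith

lemma gaussTail_pos (u : ℝ) : 0 < gaussTail u := by
  unfold gaussTail
  rw [setIntegral_pos_iff_support_of_nonneg_ae (ae_of_all _ fun x => (gaussStd_pos x).le)
    integrable_gaussStd.integrableOn]
  have : Function.support gaussStd = univ := by
    ext x; simp [(gaussStd_pos x).ne']
  simp [this]

lemma gaussTail_neg (u : ℝ) : gaussTail (-u) = 1 - gaussTail u := by
  have h1 : ∫ y in Iic u, gaussStd y = gaussTail (-u) := by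
    have := integral_comp_neg_Ioi (-u) gaussStd
    simp only [gaussStd_neg, neg_neg] at this
    exact this.symm
  have h2 := intervalIntegral.integral_Iic_add_Ioi (b := u) (f := gaussStd) (μ := volume)
    integrable_gaussStd.integrableOn integrable_gaussStd.integrableOn
  rw [h1, integral_gaussStd] at h2
  change gaussTail (-u) + gaussTail u = 1 at h2
  linarith

lemma gaussTail_lt_one (u : ℝ) : gaussTail u < 1 := by
  have := gaussTail_pos (-u)
  rw [gaussTail_neg] at this; linarith

lemma hasDerivAt_gaussTail (u : ℝ) : HasDerivAt gaussTail (-gaussStd u) u := by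
  have h : gaussTail = fun u => gaussTail 0 - ∫ y in (0 : ℝ)..u, gaussStd y := by
    funext v
    have := intervalIntegral.integral_Ioi_sub_Ioi' (a := 0) (b := v) (f := gaussStd)
      (μ := volume) integrable_gaussStd.integrableOn integrable_gaussStd.integrableOn
    simp only [gaussTail]
    linarith
  rw [h]
  exact (intervalIntegral.integral_hasDerivAt_right
    (continuous_gaussStd.intervalIntegrable _ _)
    (continuous_gaussStd.stronglyMeasurableAtFilter _ _)
    continuous_gaussStd.continuousAt).const_sub _

lemma gaussTail_strictAnti : StrictAnti gaussTail :=
  strictAnti_of_deriv_neg fun u => by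
    rw [(hasDerivAt_gaussTail u).deriv]; linarith [gaussStd_pos u]

/-- The variance of a standard normal variable conditioned on exceeding `u` is positive; in terms
of the density `φ` and the tail `Q` this reads `φ² < Q² + u φ Q`. -/
lemma gaussStd_sq_lt (u : ℝ) :
    gaussStd u ^ 2 < gaussTail u ^ 2 + u * gaussStd u * gaussTail u := by
  have hQ := gaussTail_pos u
  -- `k` is the conditional mean
  set k := gaussStd u / gaussTail u with hk
  have hint : IntegrableOn (fun y => (y - k) ^ 2 * gaussStd y) (Ioi u) := by
    refine (((integrable_sq_mul_gaussStd.sub (integrable_mul_gaussStd.const_mul (2 * k))).add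
      (integrable_gaussStd.const_mul (k ^ 2))).congr (ae_of_all _ fun x => ?_)).integrableOn
    simp only [Pi.add_apply, Pi.sub_apply]; ring
  have hpos : 0 < ∫ y in Ioi u, (y - k) ^ 2 * gaussStd y := by
    rw [setIntegral_pos_iff_support_of_nonneg_ae
      (ae_of_all _ fun x => mul_nonneg (sq_nonneg _) (gaussStd_pos x).le) hint]
    have : Function.support (fun y => (y - k) ^ 2 * gaussStd y) = {k}ᶜ := by
      ext x; simp [(gaussStd_pos x).ne', sub_eq_zero]
    rw [this, inter_comm, ← sdiff_eq, measure_sdiff_null (by simp)]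
    simp
  have heq : ∫ y in Ioi u, (y - k) ^ 2 * gaussStd y
      = gaussTail u + u * gaussStd u - 2 * k * gaussStd u + k ^ 2 * gaussTail u := by
    have h2 := integrable_sq_mul_gaussStd.integrableOn (s := Ioi u)
    have h1 := (integrable_mul_gaussStd.const_mul (2 * k)).integrableOn (s := Ioi u)
    have h0 := (integrable_gaussStd.const_mul (k ^ 2)).integrableOn (s := Ioi u)
    have h21 : IntegrableOn (fun y => y ^ 2 * gaussStd y - 2 * k * (y * gaussStd y)) (Ioi u) :=
      h2.sub h1
    have e : ∀ y, (y - k) ^ 2 * gaussStd y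
        = y ^ 2 * gaussStd y - 2 * k * (y * gaussStd y) + k ^ 2 * gaussStd y := fun y => by ring
    simp only [e]
    rw [integral_add h21 h0, integral_sub h2 h1, integral_const_mul, integral_const_mul,
      gaussTail_moment_one, gaussTail_moment_two, ← gaussTail]
  rw [heq] at hpos
  have h2 : gaussTail u + u * gaussStd u - 2 * k * gaussStd u + k ^ 2 * gaussTail u
      = (gaussTail u ^ 2 + u * gaussStd u * gaussTail u - gaussStd u ^ 2) / gaussTail u := by
    rw [hk]; field_simp; ring
  rw [h2, div_pos_iff_of_pos_right hQ] at hpos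
  linarith

/-- The hazard rate `φ / Q` of the standard normal law. -/
noncomputable def hazard (u : ℝ) : ℝ := gaussStd u / gaussTail u

lemma hasDerivAt_hazard (u : ℝ) :
    HasDerivAt hazard ((-u * gaussStd u * gaussTail u + gaussStd u ^ 2) / gaussTail u ^ 2) u :=
  ((hasDerivAt_gaussStd u).div (hasDerivAt_gaussTail u) (gaussTail_pos u).ne').congr_deriv
    (by ring)

/-- The hazard rate has slope less than `1`, hence `hazard u - hazard (-u)` grows by less than the
length `2u` of the interval. -/
lemma hazard_sub_hazard_neg_lt {u : ℝ} (hu : 0 < u) : hazard u - hazard (-u) < 2 * u := by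
  have hanti : StrictAnti fun v => hazard v - v := by
    refine strictAnti_of_deriv_neg fun v => ?_
    have hv : HasDerivAt (fun v => hazard v - v) _ v :=
      (hasDerivAt_hazard v).sub (hasDerivAt_id v)
    rw [hv.deriv, sub_neg,
      div_lt_one (pow_pos (gaussTail_pos v) 2)]
    linarith [gaussStd_sq_lt v]
  have := hanti (show -u < u by linarith)
  simp only at this
  linarith

/-- `log (Q(u) Q(-u) / φ(u)²)` up to an additive constant. -/
noncomputable def logRatio (u : ℝ) : ℝ := log (gaussTail u) + log (gaussTail (-u)) + u ^ 2

lemma hasDerivAt_logRatio (u : ℝ) :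
    HasDerivAt logRatio (2 * u - (hazard u - hazard (-u))) u := by
  have h1 := (hasDerivAt_gaussTail u).log (gaussTail_pos u).ne'
  have h2 := ((hasDerivAt_gaussTail (-u)).comp u (hasDerivAt_neg u)).log (gaussTail_pos (-u)).ne'
  refine ((h1.add h2).add (hasDerivAt_pow 2 u)).congr_deriv ?_
  simp only [hazard, Function.comp]; push_cast; ring

lemma logRatio_strictMonoOn : StrictMonoOn logRatio (Ici 0) := by
  refine strictMonoOn_of_deriv_pos (convex_Ici 0)
    (fun u _ => (hasDerivAt_logRatio u).continuousAt.continuousWithinAt) fun u hu => ?_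
  rw [interior_Ici] at hu
  rw [(hasDerivAt_logRatio u).deriv]
  linarith [hazard_sub_hazard_neg_lt hu]

lemma logRatio_abs (u : ℝ) : logRatio |u| = logRatio u := by
  rcases abs_choice u with h | h <;> rw [h]
  simp only [logRatio, neg_neg]; ring

/-- `Q(u) Q(-u) / φ(u)²` is an even function, increasing in `|u|`. -/
lemma gaussTail_ratio_lt {u v : ℝ} (h : |v| < |u|) :
    gaussStd u ^ 2 * (gaussTail v * gaussTail (-v))
      < gaussStd v ^ 2 * (gaussTail u * gaussTail (-u)) := by
  have hlt := logRatio_strictMonoOn (abs_nonneg v) (abs_nonneg u) h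
  rw [logRatio_abs, logRatio_abs] at hlt
  have hexp : ∀ w, gaussTail w * gaussTail (-w) = rexp (logRatio w - w ^ 2) := fun w => by
    simp only [logRatio, add_sub_cancel_right]
    rw [exp_add, exp_log (gaussTail_pos _), exp_log (gaussTail_pos _)]
  have hsq : ∀ w, gaussStd w ^ 2 = (√(2 * π))⁻¹ ^ 2 * rexp (-w ^ 2) := fun w => by
    rw [gaussStd, mul_pow, ← exp_nat_mul]; congr 2; push_cast; ring
  rw [hexp, hexp, hsq, hsq, mul_assoc, mul_assoc, ← exp_add, ← exp_add]
  have : rexp (-u ^ 2 + (logRatio v - v ^ 2)) < rexp (-v ^ 2 + (logRatio u - u ^ 2)) :=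
    exp_lt_exp.2 (by linarith)
  exact mul_lt_mul_of_pos_left this (by positivity)

lemma gaussStd_lt {u v : ℝ} (h : |v| < |u|) : gaussStd u < gaussStd v := by
  unfold gaussStd
  have := sq_lt_sq.2 h
  exact mul_lt_mul_of_pos_left (exp_lt_exp.2 (by linarith)) (by positivity)

/-! ### Comparison of logit increments -/

lemma mul_sinh_le {v u : ℝ} (hv : 0 < v) (hvu : v ≤ u) : u * sinh v ≤ v * sinh u := by
  have hconv : ConvexOn ℝ (Ici 0) sinh := by
    refine convexOn_of_deriv2_nonneg (convex_Ici 0) continuous_sinh.continuousOn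
      differentiable_sinh.differentiableOn ?_ fun x hx => ?_
    · rw [Real.deriv_sinh]; exact differentiable_cosh.differentiableOn
    · rw [interior_Ici] at hx
      simpa using (sinh_pos_iff.2 hx).le
  have hu : 0 < u := hv.trans_le hvu
  have hnn : 0 ≤ 1 - v / u := by rw [sub_nonneg, div_le_one hu]; exact hvu
  have h := hconv.2 (mem_Ici.2 le_rfl) (mem_Ici.2 hu.le) hnn
    (show 0 ≤ v / u by positivity) (by ring)
  simp only [smul_eq_mul, mul_zero, zero_add, sinh_zero, div_mul_cancel₀ v hu.ne'] at h
  calc u * sinh v ≤ u * (v / u * sinh u) := mul_le_mul_of_nonneg_left h hu.le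
    _ = v * sinh u := by field_simp

/-- The logit function `log (w / (1 - w))`, the negative of the derivative of binary entropy. -/
noncomputable def logit (w : ℝ) : ℝ := log w - log (1 - w)

lemma logit_lt {x y : ℝ} (hx : 0 < x) (hxy : x < y) (hy : y < 1) : logit x < logit y := by
  unfold logit
  have h1 := log_lt_log hx hxy
  have h2 := log_lt_log (by linarith : 0 < 1 - y) (by linarith : 1 - y < 1 - x)
  linarith

/-- Half a logit increment, measured through `sinh`, is algebraic in the endpoints. -/
lemma sinh_logit_sub {x y : ℝ} (hx : 0 < x) (hx1 : x < 1) (hy : 0 < y) (hy1 : y < 1) :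
    sinh ((logit y - logit x) / 2) * (2 * (√(y * (1 - y)) * √(x * (1 - x)))) = y - x := by
  have hx' : 0 < 1 - x := by linarith
  have hy' : 0 < 1 - y := by linarith
  have hexp : ∀ z : ℝ, 0 < z → rexp (log z / 2) = √z := fun z hz => by
    rw [sqrt_eq_rpow, rpow_def_of_pos hz]; congr 1; ring
  have e1 : rexp ((logit y - logit x) / 2) = √y * √(1 - x) / (√x * √(1 - y)) := by
    rw [← hexp y hy, ← hexp x hx, ← hexp _ hx', ← hexp _ hy', ← exp_add, ← exp_add, ← exp_sub]
    congr 1; unfold logit; ring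
  have e2 : rexp (-((logit y - logit x) / 2)) = √x * √(1 - y) / (√y * √(1 - x)) := by
    rw [exp_neg, e1, inv_div]
  rw [sinh_eq, e1, e2, sqrt_mul hy.le, sqrt_mul hx.le]
  have p1 := sqrt_pos.2 hx
  have p2 := sqrt_pos.2 hy
  have p3 := sqrt_pos.2 hx'
  have p4 := sqrt_pos.2 hy'
  have s1 := sq_sqrt hx.le
  have s2 := sq_sqrt hy.le
  have s3 := sq_sqrt hx'.le
  have s4 := sq_sqrt hy'.le
  have : (√y * √(1 - x) / (√x * √(1 - y)) - √x * √(1 - y) / (√y * √(1 - x))) / 2 *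
      (2 * (√y * √(1 - y) * (√x * √(1 - x))))
      = √y ^ 2 * √(1 - x) ^ 2 - √x ^ 2 * √(1 - y) ^ 2 := by
    field_simp
  rw [this, s1, s2, s3, s4]; ring

/-- For the midpoint `m` of `b < a`, the ratio of the logit increments over `[m, a]` and `[b, m]`
is at most `1` or at most `√(b(1-b) / (a(1-a)))`, because `u / sinh u` decreases. The hypotheses on
`α` and `β` say that both bounds are less than `β / α`. -/
lemma logit_increment_lt {a b α β : ℝ} (hb : 0 < b) (hba : b < a) (ha : a < 1)
    (hα : 0 < α) (hαβ : α < β) (h : α ^ 2 * (b * (1 - b)) < β ^ 2 * (a * (1 - a))) :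
    α * (logit a - logit ((a + b) / 2)) < β * (logit ((a + b) / 2) - logit b) := by
  set m := (a + b) / 2 with hm
  have hbm : b < m := by linarith
  have hma : m < a := by linarith
  have hU : 0 < logit a - logit m := sub_pos.2 (logit_lt (by linarith) hma ha)
  have hV : 0 < logit m - logit b := sub_pos.2 (logit_lt hb hbm (by linarith))
  have sU := sinh_logit_sub (x := m) (y := a) (by linarith) (by linarith) (by linarith) ha
  have sV := sinh_logit_sub (x := b) (y := m) hb (by linarith) (by linarith) (by linarith)
  set U := logit a - logit m
  set V := logit m - logit b
  have hβ : 0 < β := hα.trans hαβ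
  rcases le_or_gt U V with hUV | hVU
  · calc α * U ≤ α * V := mul_le_mul_of_nonneg_left hUV hα.le
      _ < β * V := mul_lt_mul_of_pos_right hαβ hV
  · have hs := mul_sinh_le (v := V / 2) (u := U / 2) (by linarith) (by linarith)
    have pA : 0 < √(a * (1 - a)) := sqrt_pos.2 (mul_pos (by linarith) (by linarith))
    have pB : 0 < √(b * (1 - b)) := sqrt_pos.2 (mul_pos (by linarith) (by linarith))
    have pM : 0 < √(m * (1 - m)) := sqrt_pos.2 (mul_pos (by linarith) (by linarith))
    have h' : α * √(b * (1 - b)) < β * √(a * (1 - a)) := by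
      refine lt_of_pow_lt_pow_left₀ 2 (by positivity) ?_
      rw [mul_pow, mul_pow, sq_sqrt (sqrt_pos.1 pA).le, sq_sqrt (sqrt_pos.1 pB).le]
      exact h
    set A := √(a * (1 - a))
    set B := √(b * (1 - b))
    set M := √(m * (1 - m))
    have heq : sinh (U / 2) * A = sinh (V / 2) * B := by
      have : (sinh (U / 2) * A) * (2 * M) = (sinh (V / 2) * B) * (2 * M) := by
        have : a - m = m - b := by rw [hm]; ring
        linarith
      exact mul_right_cancel₀ (by positivity) this
    have hsU : 0 < sinh (U / 2) := sinh_pos_iff.2 (by linarith)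
    have hsV : 0 < sinh (V / 2) := sinh_pos_iff.2 (by linarith)
    have hUA : U * A ≤ V * B := by
      refine le_of_mul_le_mul_right ?_ hsV
      calc U * A * sinh (V / 2) = 2 * A * (U / 2 * sinh (V / 2)) := by ring
        _ ≤ 2 * A * (V / 2 * sinh (U / 2)) := mul_le_mul_of_nonneg_left hs (by positivity)
        _ = V * (sinh (U / 2) * A) := by ring
        _ = V * B * sinh (V / 2) := by rw [heq]; ring
    refine lt_of_mul_lt_mul_right ?_ pA.le
    calc α * U * A = α * (U * A) := by ring
      _ ≤ α * (V * B) := mul_le_mul_of_nonneg_left hUA hα.le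
      _ = (α * B) * V := by ring
      _ < (β * A) * V := mul_lt_mul_of_pos_right h' hV
      _ = β * V * A := by ring

/-! ### Mutual information in standardized coordinates -/

lemma hasDerivAt_Hb {w : ℝ} (h0 : 0 < w) (h1 : w < 1) : HasDerivAt Hb (-logit w) w := by
  have : Hb = binEntropy := by
    funext p; simp only [Hb, binEntropy, log_inv]; ring
  rw [this]
  exact (hasDerivAt_binEntropy h0.ne' h1.ne).congr_deriv (by unfold logit; ring)

lemma Hb_one_sub (w : ℝ) : Hb (1 - w) = Hb w := by
  simp only [Hb, sub_sub_cancel]; ring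

/-- The mutual information as a function of the standardized threshold `x = (t - t*) / σ`, where
`d = (μ1 - μ0) / (2σ)`. -/
noncomputable def stdInfo (d x : ℝ) : ℝ :=
  Hb ((gaussTail (-(x + d)) + gaussTail (-(x - d))) / 2)
    - (1 / 2) * Hb (gaussTail (-(x + d))) - (1 / 2) * Hb (gaussTail (-(x - d)))

lemma stdInfo_neg (d x : ℝ) : stdInfo d (-x) = stdInfo d x := by
  have h1 : gaussTail (-(-x + d)) = 1 - gaussTail (-(x - d)) := by
    rw [← gaussTail_neg]; congr 1; ring
  have h2 : gaussTail (-(-x - d)) = 1 - gaussTail (-(x + d)) := by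
    rw [← gaussTail_neg]; congr 1; ring
  simp only [stdInfo, h1, h2, Hb_one_sub]
  rw [← Hb_one_sub ((gaussTail (-(x + d)) + gaussTail (-(x - d))) / 2)]
  ring_nf

lemma hasDerivAt_cdf (c x : ℝ) :
    HasDerivAt (fun x => gaussTail (-(x + c))) (gaussStd (x + c)) x := by
  have h1 : HasDerivAt (fun x => -(x + c)) (-1) x := ((hasDerivAt_id x).add_const c).neg
  have h2 := (hasDerivAt_gaussTail (-(x + c))).comp x h1
  exact h2.congr_deriv (by rw [gaussStd_neg]; ring)

lemma hasDerivAt_stdInfo (d x : ℝ) :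
    HasDerivAt (stdInfo d)
      ((1 / 2) * (gaussStd (x + d) * (logit (gaussTail (-(x + d)))
          - logit ((gaussTail (-(x + d)) + gaussTail (-(x - d))) / 2))
        - gaussStd (x - d) * (logit ((gaussTail (-(x + d)) + gaussTail (-(x - d))) / 2)
          - logit (gaussTail (-(x - d)))))) x := by
  have ha := hasDerivAt_cdf d x
  have hb := hasDerivAt_cdf (-d) x
  simp only [← sub_eq_add_neg] at hb
  have a0 := gaussTail_pos (-(x + d))
  have a1 := gaussTail_lt_one (-(x + d))
  have b0 := gaussTail_pos (-(x - d))
  have b1 := gaussTail_lt_one (-(x - d))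
  have hA := (hasDerivAt_Hb a0 a1).comp x ha
  have hB := (hasDerivAt_Hb b0 b1).comp x hb
  have hM := (hasDerivAt_Hb (w := (gaussTail (-(x + d)) + gaussTail (-(x - d))) / 2)
    (by linarith) (by linarith)).comp x ((ha.add hb).div_const 2)
  exact ((hM.sub (hA.const_mul (1 / 2))).sub (hB.const_mul (1 / 2))).congr_deriv (by ring)

/-- For `x > 0` the two densities satisfy `φ(x + d) < φ(x - d)` and the monotonicity of
`Q(u) Q(-u) / φ(u)²` supplies the remaining hypothesis of `logit_increment_lt`, which says exactly
that the derivative is negative. -/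
lemma stdInfo_strictAntiOn {d : ℝ} (hd : 0 < d) : StrictAntiOn (stdInfo d) (Ici 0) := by
  refine strictAntiOn_of_deriv_neg (convex_Ici 0)
    (fun x _ => (hasDerivAt_stdInfo d x).continuousAt.continuousWithinAt) fun x hx => ?_
  rw [interior_Ici] at hx
  have hx : 0 < x := hx
  rw [(hasDerivAt_stdInfo d x).deriv]
  have habs : |x - d| < |x + d| := by
    rw [abs_of_pos (by linarith : 0 < x + d), abs_lt]; constructor <;> linarith
  have hr := gaussTail_ratio_lt habs
  have key := logit_increment_lt (gaussTail_pos (-(x - d)))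
    (gaussTail_strictAnti (show -(x + d) < -(x - d) by linarith)) (gaussTail_lt_one (-(x + d)))
    (gaussStd_pos (x + d)) (gaussStd_lt habs) (by
      rw [← gaussTail_neg, ← gaussTail_neg, neg_neg, neg_neg]; linarith)
  linarith

lemma stdInfo_lt_zero {d x : ℝ} (hd : 0 < d) (hx : x ≠ 0) : stdInfo d x < stdInfo d 0 := by
  have h := stdInfo_strictAntiOn hd (mem_Ici.2 le_rfl) (mem_Ici.2 (abs_nonneg x))
    (abs_pos.2 hx)
  rcases abs_choice x with h' | h' <;> rw [h'] at h
  · exact h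
  · rwa [stdInfo_neg] at h

/-- Standardization of a normal tail probability. -/
lemma integral_Ioi_normal {σ : ℝ} (hσ : 0 < σ) (μ t : ℝ) :
    ∫ y in Ioi t, (1 / (σ * √(2 * π))) * rexp (-(y - μ) ^ 2 / (2 * σ ^ 2))
      = gaussTail ((t - μ) / σ) := by
  have hint : Integrable fun x => gaussStd ((x - μ) / σ) * (1 / σ) :=
    ((integrable_gaussStd.comp_div hσ.ne').comp_sub_right μ).mul_const _
  have h := integral_comp_mul_deriv_Ioi (f := fun x => (x - μ) / σ) (f' := fun _ => 1 / σ)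
    (g := gaussStd) (a := t) (by fun_prop)
    ((tendsto_atTop_add_const_right _ (-μ) tendsto_id).atTop_div_const hσ)
    (fun x _ => (((hasDerivAt_id x).sub_const μ).div_const σ).hasDerivWithinAt)
    continuous_gaussStd.continuousOn integrable_gaussStd.integrableOn hint.integrableOn
  rw [gaussTail, ← h]
  refine integral_congr_ae (ae_of_all _ fun y => ?_)
  have : -(y - μ) ^ 2 / (2 * σ ^ 2) = -(1 / 2) * ((y - μ) / σ) ^ 2 := by field_simp
  simp only [Function.comp, gaussStd, this]
  field_simp

/-- for equal-variance Gaussian densities with means `μ0 < μ1` and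
uniform input probabilities, the midpoint `t* = (μ0 + μ1)/2` is the unique
maximizer of the single-threshold mutual information. -/
theorem stmt_16
    (σ μ0 μ1 : ℝ) (hσ : 0 < σ) (hμ : μ0 < μ1)
    (φ0 φ1 : ℝ → ℝ)
    (hφ0 : φ0 = fun y =>
      (1 / (σ * Real.sqrt (2 * Real.pi))) * Real.exp (-(y - μ0) ^ 2 / (2 * σ ^ 2)))
    (hφ1 : φ1 = fun y =>
      (1 / (σ * Real.sqrt (2 * Real.pi))) * Real.exp (-(y - μ1) ^ 2 / (2 * σ ^ 2))) :
    (∀ t : ℝ, I1 φ0 φ1 t ≤ I1 φ0 φ1 ((μ0 + μ1) / 2)) ∧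
    (∀ t : ℝ, I1 φ0 φ1 t = I1 φ0 φ1 ((μ0 + μ1) / 2) → t = (μ0 + μ1) / 2) := by
  have h1 : ∀ t, A11 φ0 t = gaussTail (-((t - μ0) / σ)) := fun t => by
    rw [A11, ← integral_Iic_eq_integral_Iio, ← neg_neg t, ← integral_comp_neg_Ioi, neg_neg,
      show -((t - μ0) / σ) = (-t - -μ0) / σ by ring, ← integral_Ioi_normal hσ, hφ0]
    refine integral_congr_ae (ae_of_all _ fun y => ?_)
    have : (-y - μ0) ^ 2 = (y - -μ0) ^ 2 := by ring
    simp only [this]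
  have h2 : ∀ t, A22 φ1 t = 1 - gaussTail (-((t - μ1) / σ)) := fun t => by
    rw [A22, hφ1, integral_Ioi_normal hσ, gaussTail_neg, sub_sub_cancel]
  have hd : 0 < (μ1 - μ0) / (2 * σ) := div_pos (sub_pos.2 hμ) (by positivity)
  have hI : ∀ t, I1 φ0 φ1 t = stdInfo ((μ1 - μ0) / (2 * σ)) ((t - (μ0 + μ1) / 2) / σ) := by
    intro t
    have e1 : (t - μ0) / σ = (t - (μ0 + μ1) / 2) / σ + (μ1 - μ0) / (2 * σ) := by
      field_simp; ring
    have e2 : (t - μ1) / σ = (t - (μ0 + μ1) / 2) / σ - (μ1 - μ0) / (2 * σ) := by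
      field_simp; ring
    rw [I1, h1, h2, Hb_one_sub, sub_sub_cancel, e1, e2, stdInfo]
    congr 3; ring
  have hlt : ∀ t, t ≠ (μ0 + μ1) / 2 → I1 φ0 φ1 t < I1 φ0 φ1 ((μ0 + μ1) / 2) := by
    intro t ht
    rw [hI, hI ((μ0 + μ1) / 2), sub_self, zero_div]
    exact stdInfo_lt_zero hd (div_ne_zero (sub_ne_zero.2 ht) hσ.ne')
  refine ⟨fun t => ?_, fun t h => ?_⟩
  · rcases eq_or_ne t ((μ0 + μ1) / 2) with rfl | ht
    · exact le_rfl
    · exact (hlt t ht).le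
  · by_contra ht
    exact (hlt t ht).ne h
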